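/- Let n ≥ 1, m > n, and let p ∈ P^log(ℝ^n) be a measurable exponent with 2 ≤ p⁻ ≤ p⁺ < ∞ and p⁺ = p_∞. Define ϑ : (0,∞) → ℝ by ϑ(t) = (2/p⁻ − 1/p_∞)·((2 + p_∞(1 − 2/p⁻))/(1 + p_∞(1 − 2/p⁻)) − 1/(p_∞ − 1)) for 0 < t ≤ 1, and ϑ(t) = (1/p_∞)·(p_∞(1 − 2/p⁻)/(1 + p_∞(1 − 2/p⁻)) + 1/(p_∞ − 1)) for t > 1. Then there exists a constant C > 0, depending only on p, m and n, such that for every t > 0 and every f ∈ L^{p(·)/2}(ℝ^n), ‖η_{t,m} * f‖_{L^{p(·)}(ℝ^n)} ≤ C t^{−nϑ(t)} ‖f‖_{L^{p(·)/2}(ℝ^n)}. -/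

import Mathlib

open MeasureTheory Filter Real
open scoped ENNReal

noncomputable section

/-- Euclidean space `ℝⁿ`. -/
abbrev Esp (n : ℕ) := EuclideanSpace ℝ (Fin n)

/-- The variable exponent modular `ρ_{p(·)}(f) = ∫_{ℝⁿ} |f(x)|^{p(x)} dx`. -/
def vMod (n : ℕ) (p : Esp n → ℝ) (f : Esp n → ℝ) : ℝ≥0∞ :=
  ∫⁻ x, (ENNReal.ofReal |f x|) ^ (p x) ∂volume

/-- The Luxemburg norm `‖f‖_{L^{p(·)}} = inf {λ > 0 : ρ_{p(·)}(f/λ) ≤ 1}`. -/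
def luxNorm (n : ℕ) (p : Esp n → ℝ) (f : Esp n → ℝ) : ℝ :=
  sInf {lam : ℝ | 0 < lam ∧ vMod n p (fun x => f x / lam) ≤ 1}

/-- Membership in the variable exponent Lebesgue space `L^{p(·)}(ℝⁿ)`. -/
def MemVLp (n : ℕ) (p : Esp n → ℝ) (f : Esp n → ℝ) : Prop :=
  AEMeasurable f volume ∧ ∃ lam : ℝ, 0 < lam ∧ vMod n p (fun x => f x / lam) ≤ 1

/-- Global log-Hölder continuity of `1/p` with decay value `l` (representing `l = 1/p_∞`). -/
def IsLogHolder (n : ℕ) (p : Esp n → ℝ) (l : ℝ) : Prop :=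
  ∃ c : ℝ, 0 < c ∧
    (∀ x y : Esp n, |1 / p x - 1 / p y| ≤ c / Real.log (Real.exp 1 + 1 / ‖x - y‖)) ∧
    (∀ x : Esp n, |1 / p x - l| ≤ c / Real.log (Real.exp 1 + ‖x‖))

/-- The kernel `η_{t,m}(x) = t^{-n} (1 + |x|/t)^{-m}`. -/
def etaKer (n : ℕ) (t m : ℝ) (x : Esp n) : ℝ :=
  t ^ (-(n : ℝ)) * (1 + ‖x‖ / t) ^ (-m)

/-- Convolution `(u * v)(x) = ∫ u(x - y) v(y) dy`. -/
def convR (n : ℕ) (u v : Esp n → ℝ) (x : Esp n) : ℝ :=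
  ∫ y, u (x - y) * v y ∂volume

/-!
Put `q = p / 2`, so that `L^{p(·)/2} = L^{q(·)}` and `L^{p(·)} = L^{2q(·)}`, and let
`g = η_{t,m} * f` with `‖f‖_{L^{q(·)}} ≤ 1`. Convolution with `η_{t,m}` is bounded on `L^{q(·)}`
uniformly in `t`, and it maps `L^{q(·)}` into `L^∞` with norm of order `t^{-n/q⁻}` for `t ≤ 1` and
`t^{-n/q_∞}` for `t > 1`. Since `|g|^{2q} = |g|^q |g|^q`, the two bounds interpolate to a bound
`L^{q(·)} → L^{p(·)}` of order `t^{-n/p⁻}`, respectively `t^{-n/p_∞}`. These rates are at least as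
good as `t^{-nϑ(t)}`, because `ϑ(t) ≥ 1/p⁻` for `t ≤ 1` and `ϑ(t) ≤ 1/p_∞` for `t > 1`.

For the two bounds, split `|f|` at height `1`. On the small part the decay condition allows `q(·)`
to be replaced by the constant `q_∞`, at the cost of an integrable error. On the large part, which
is dominated by its `q(·)`-th power, the kernel is cut at a fixed radius. The far piece of the
kernel is bounded uniformly in `t`. The near piece is handled by a Jensen inequality: with
`J(x) = ∫ |f(y)|^{q(y)} η_{t,m'}(x - y) dy` for some `n < m' < m`, splitting `f` at the height
`M = J(x)^{1/q(x)} ≤ t^{-n/q(x)}` produces the factors `M^{q(x) - q(y)}`, which local log-Hölder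
continuity makes small enough to be absorbed by the spare power `(1 + |x - y| / t)^{m' - m}`.
-/

section ENNRealPowers

lemma ennreal_rpow_le_rpow_of_nonpos {a b : ℝ≥0∞} {z : ℝ} (hz : z ≤ 0) (h : a ≤ b) :
    b ^ z ≤ a ^ z := by
  rw [← ENNReal.inv_le_inv, ← ENNReal.rpow_neg, ← ENNReal.rpow_neg]
  exact ENNReal.rpow_le_rpow h (neg_nonneg.2 hz)

lemma le_add_rpow_mul_rpow_one_sub {M : ℝ≥0∞} (hM : M ≠ 0) (hM' : M ≠ ∞) {q : ℝ} (hq : 1 ≤ q)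
    (f : ℝ≥0∞) : f ≤ M + f ^ q * M ^ (1 - q) := by
  rcases le_total f M with h | h
  · exact h.trans le_self_add
  · refine le_trans ?_ le_add_self
    calc f = f * (M ^ (q - 1) * M ^ (1 - q)) := by
          rw [← ENNReal.rpow_add _ _ hM hM', sub_add_sub_cancel, sub_self, ENNReal.rpow_zero,
            mul_one]
      _ ≤ f * (f ^ (q - 1) * M ^ (1 - q)) := by gcongr
      _ = f ^ (1 + (q - 1)) * M ^ (1 - q) := by
          rw [ENNReal.rpow_add_of_nonneg _ _ zero_le_one (by linarith), ENNReal.rpow_one, mul_assoc]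
      _ = f ^ q * M ^ (1 - q) := by rw [add_sub_cancel]

lemma rpow_le_rpow_mul_div_rpow {B : ℝ≥0∞} (hB : 1 ≤ B) (hB' : B ≠ ∞) {q Q : ℝ} (hq : 0 ≤ q)
    (hqQ : q ≤ Q) (g : ℝ≥0∞) : g ^ q ≤ B ^ Q * (g / B) ^ q := by
  calc g ^ q = (B * (g / B)) ^ q := by
        rw [ENNReal.mul_div_cancel (zero_lt_one.trans_le hB).ne' hB']
    _ = B ^ q * (g / B) ^ q := ENNReal.mul_rpow_of_nonneg _ _ hq
    _ ≤ B ^ Q * (g / B) ^ q := by gcongr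

lemma div_rpow_two_mul_le {g T B : ℝ≥0∞} (hB : 1 ≤ B) (hg : g ≤ B * T ^ 2) {q Q : ℝ}
    (hq : 0 ≤ q) (hqQ : q ≤ Q) : (g / T) ^ (2 * q) ≤ B ^ Q * g ^ q := by
  have hsq : (g / T) ^ 2 ≤ B * g := by
    calc (g / T) ^ 2 = g / T ^ 2 * g := by
          simp only [div_eq_mul_inv, mul_pow, ENNReal.inv_pow]; ring
      _ ≤ B * g := by gcongr; exact ENNReal.div_le_of_le_mul hg
  calc (g / T) ^ (2 * q) = ((g / T) ^ 2) ^ q := by rw [ENNReal.rpow_mul, ENNReal.rpow_two]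
    _ ≤ (B * g) ^ q := by gcongr
    _ = B ^ q * g ^ q := ENNReal.mul_rpow_of_nonneg _ _ hq
    _ ≤ B ^ Q * g ^ q := by gcongr

end ENNRealPowers

section ModularIntegrals

variable {α : Type*} [MeasurableSpace α] {μ : Measure α} {q : α → ℝ} {Q : ℝ}

lemma lintegral_rpow_le_mul_lintegral_of_le {g : α → ℝ≥0∞} {B : ℝ≥0∞} (hB : 1 ≤ B) (hB' : B ≠ ∞)
    (hg : ∀ x, g x ≤ B) (hq : ∀ x, 1 ≤ q x) (hqQ : ∀ x, q x ≤ Q) :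
    ∫⁻ x, g x ^ q x ∂μ ≤ B ^ Q * ∫⁻ x, g x ∂μ := by
  rcases isEmpty_or_nonempty α with _ | ⟨⟨x₀⟩⟩
  · simp
  have hQ : 0 ≤ Q := zero_le_one.trans ((hq x₀).trans (hqQ x₀))
  rw [← lintegral_const_mul' _ _ (ENNReal.rpow_ne_top_of_nonneg hQ hB')]
  refine lintegral_mono fun x => ?_
  calc g x ^ q x ≤ B ^ Q * (g x / B) ^ q x :=
        rpow_le_rpow_mul_div_rpow hB hB' (zero_le_one.trans (hq x)) (hqQ x) _
    _ ≤ B ^ Q * (g x / B) := by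
        gcongr
        exact ENNReal.rpow_le_self_of_le_one
          (ENNReal.div_le_of_le_mul ((hg x).trans_eq (one_mul B).symm)) (hq x)
    _ ≤ B ^ Q * g x := by
        gcongr
        exact ENNReal.div_le_of_le_mul (le_mul_of_one_le_right' hB)

lemma lintegral_add_rpow_le {f g : α → ℝ≥0∞} (hf : Measurable f) (hqm : Measurable q)
    (hq : ∀ x, 0 ≤ q x) (hqQ : ∀ x, q x ≤ Q) :
    ∫⁻ x, (f x + g x) ^ q x ∂μ ≤
      2 ^ Q * (∫⁻ x, f x ^ q x ∂μ + ∫⁻ x, g x ^ q x ∂μ) := by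
  rcases isEmpty_or_nonempty α with _ | ⟨⟨x₀⟩⟩
  · simp
  have hQ : 0 ≤ Q := (hq x₀).trans (hqQ x₀)
  rw [← lintegral_add_left (hf.pow hqm),
    ← lintegral_const_mul' _ _ (ENNReal.rpow_ne_top_of_nonneg hQ ENNReal.ofNat_ne_top)]
  refine lintegral_mono fun x => ?_
  refine (ENNReal.add_rpow_le_two_rpow_mul_rpow_add_rpow _ _ (hq x)).trans ?_
  gcongr
  · norm_num
  · exact hqQ x

lemma exists_add_eq_le_one_le_rpow {F : α → ℝ≥0∞} (hF : Measurable F) (hq : ∀ x, 1 ≤ q x) :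
    ∃ F₁ F₂ : α → ℝ≥0∞, Measurable F₁ ∧ Measurable F₂ ∧ F₁ + F₂ = F ∧ (∀ x, F₁ x ≤ 1) ∧
      (∀ x, F₂ x ≤ F₂ x ^ q x) ∧ ∫⁻ x, F₁ x ^ q x ∂μ ≤ ∫⁻ x, F x ^ q x ∂μ ∧
      ∫⁻ x, F₂ x ^ q x ∂μ ≤ ∫⁻ x, F x ^ q x ∂μ := by
  have hs : MeasurableSet {x | F x ≤ 1} := measurableSet_le hF measurable_const
  have hmono : ∀ s : Set α, ∫⁻ x, s.indicator F x ^ q x ∂μ ≤ ∫⁻ x, F x ^ q x ∂μ := fun s =>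
    lintegral_mono fun x =>
      ENNReal.rpow_le_rpow (Set.indicator_le_self s F x) (zero_le_one.trans (hq x))
  refine ⟨{x | F x ≤ 1}.indicator F, {x | F x ≤ 1}ᶜ.indicator F, hF.indicator hs,
    hF.indicator hs.compl, Set.indicator_self_add_compl _ F, fun x => ?_, fun x => ?_,
    hmono _, hmono _⟩
  · exact Set.indicator_apply_le' id fun _ => zero_le
  · by_cases hx : F x ≤ 1
    · simp [hx]
    · simpa [hx] using ENNReal.le_rpow_self_of_one_le (not_le.1 hx).le (hq x)

lemma lintegral_mul_le_lintegral_rpow_mul {f k : α → ℝ≥0∞} (hf : Measurable f) (hk : Measurable k)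
    {s : ℝ} (hs : 1 ≤ s) :
    ∫⁻ y, f y * k y ∂μ ≤ (∫⁻ y, k y ∂μ) ^ (1 - 1 / s) * (∫⁻ y, f y ^ s * k y ∂μ) ^ (1 / s) := by
  have hweight : ∀ g : α → ℝ≥0∞, Measurable g →
      ∫⁻ y, g y * k y ∂μ = ∫⁻ y, g y ∂(μ.withDensity k) := fun g hg => by
    rw [lintegral_withDensity_eq_lintegral_mul _ hk hg]
    simp only [Pi.mul_apply, mul_comm]
  have h := eLpNorm'_le_eLpNorm'_mul_rpow_measure_univ (μ := μ.withDensity k) zero_lt_one hs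
    hf.aestronglyMeasurable
  simp only [eLpNorm', enorm_eq_self, ENNReal.rpow_one, div_one] at h
  rw [hweight f hf, hweight _ (hf.pow_const s), mul_comm]
  simpa [withDensity_apply] using h

/-- A variable exponent Jensen inequality. Splitting `f` at the height `M` costs the factor
`M ^ (1 - q y)`, which the kernel `k` is required to absorb. -/
lemma lintegral_mul_le_mul_of_lintegral_rpow_mul_le {f k k' : α → ℝ≥0∞} (hf : Measurable f)
    (hk : Measurable k) (hk' : Measurable k') (hqm : Measurable q) (hq : ∀ y, 1 ≤ q y)
    {M A : ℝ≥0∞} (hM : M ≠ 0) (hM' : M ≠ ∞) {s : ℝ} (hfM : ∫⁻ y, f y ^ q y * k' y ∂μ ≤ M ^ s)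
    (hkA : ∀ y, k y ≤ A * k' y * M ^ (q y - s)) :
    ∫⁻ y, f y * k y ∂μ ≤ (∫⁻ y, k y ∂μ + A) * M := by
  have hpt : ∀ y, f y * k y ≤ k y * M + A * M ^ (1 - s) * (f y ^ q y * k' y) := fun y => by
    calc f y * k y ≤ (M + f y ^ q y * M ^ (1 - q y)) * k y := by
          gcongr; exact le_add_rpow_mul_rpow_one_sub hM hM' (hq y) _
      _ = k y * M + f y ^ q y * M ^ (1 - q y) * k y := by ring
      _ ≤ k y * M + f y ^ q y * M ^ (1 - q y) * (A * k' y * M ^ (q y - s)) := by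
          gcongr; exact hkA y
      _ = k y * M + A * (M ^ (1 - q y) * M ^ (q y - s)) * (f y ^ q y * k' y) := by ring
      _ = k y * M + A * M ^ (1 - s) * (f y ^ q y * k' y) := by
          rw [← ENNReal.rpow_add _ _ hM hM', sub_add_sub_cancel]
  calc ∫⁻ y, f y * k y ∂μ
      ≤ ∫⁻ y, (k y * M + A * M ^ (1 - s) * (f y ^ q y * k' y)) ∂μ := lintegral_mono hpt
    _ = (∫⁻ y, k y ∂μ) * M + A * M ^ (1 - s) * ∫⁻ y, f y ^ q y * k' y ∂μ := by
        rw [lintegral_add_left (by fun_prop), lintegral_mul_const _ hk,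
          lintegral_const_mul _ (by fun_prop)]
    _ ≤ (∫⁻ y, k y ∂μ) * M + A * M ^ (1 - s) * M ^ s := by gcongr
    _ = (∫⁻ y, k y ∂μ + A) * M := by
        rw [mul_assoc A, ← ENNReal.rpow_add _ _ hM hM', sub_add_cancel, ENNReal.rpow_one, add_mul]

lemma lintegral_mul_le_mul_lintegral_rpow_mul_rpow {f k k' : α → ℝ≥0∞} (hf : Measurable f)
    (hk : Measurable k) (hk' : Measurable k') (hqm : Measurable q) (hq : ∀ y, 1 ≤ q y)
    (hfq : ∀ y, f y ≤ f y ^ q y) (hkk' : ∀ y, k y ≤ k' y) {A : ℝ≥0∞} (hA : 1 ≤ A) {s : ℝ}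
    (hs : 1 ≤ s) (hJ : ∫⁻ y, f y ^ q y * k' y ∂μ ≠ ∞)
    (hkA : ∀ M, 1 ≤ M → M ^ s = ∫⁻ y, f y ^ q y * k' y ∂μ →
      ∀ y, k y ≤ A * k' y * M ^ (q y - s)) :
    ∫⁻ y, f y * k y ∂μ ≤ (∫⁻ y, k y ∂μ + A) * (∫⁻ y, f y ^ q y * k' y ∂μ) ^ (1 / s) := by
  set J := ∫⁻ y, f y ^ q y * k' y ∂μ
  have hs0 : 0 < s := zero_lt_one.trans_le hs
  rcases le_total J 1 with hJ1 | hJ1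
  · calc ∫⁻ y, f y * k y ∂μ ≤ J := lintegral_mono fun y => mul_le_mul' (hfq y) (hkk' y)
      _ ≤ J ^ (1 / s) := by
          simpa using ENNReal.rpow_le_rpow_of_exponent_ge hJ1 ((div_le_one hs0).2 hs)
      _ ≤ (∫⁻ y, k y ∂μ + A) * J ^ (1 / s) :=
          le_mul_of_one_le_left' (le_add_of_nonneg_of_le zero_le hA)
  · have hM : 1 ≤ J ^ (1 / s) := ENNReal.one_le_rpow hJ1 (by positivity)
    have hMs : (J ^ (1 / s)) ^ s = J := by
      rw [← ENNReal.rpow_mul, one_div_mul_cancel hs0.ne', ENNReal.rpow_one]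
    exact lintegral_mul_le_mul_of_lintegral_rpow_mul_le hf hk hk' hqm hq
      (zero_lt_one.trans_le hM).ne' (ENNReal.rpow_ne_top_of_nonneg (by positivity) hJ) hMs.ge
      (hkA _ hM hMs)

end ModularIntegrals

section Convolution

variable {G : Type*} [MeasurableSpace G] {μ : Measure G} {f k : G → ℝ≥0∞}

section AddGroup

variable [AddGroup G]

lemma lconvolution_add_right [MeasurableAdd₂ G] [MeasurableNeg G] {k' : G → ℝ≥0∞}
    (hf : Measurable f) (hk : Measurable k) :
    f ⋆ₗ[μ] (k + k') = f ⋆ₗ[μ] k + f ⋆ₗ[μ] k' := by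
  funext x
  simp only [lconvolution_def, Pi.add_apply, mul_add]
  exact lintegral_add_left (by fun_prop) _

lemma lconvolution_add_left [MeasurableAdd₂ G] [MeasurableNeg G] {f' : G → ℝ≥0∞}
    (hf : Measurable f) (hk : Measurable k) :
    (f + f') ⋆ₗ[μ] k = f ⋆ₗ[μ] k + f' ⋆ₗ[μ] k := by
  funext x
  simp only [lconvolution_def, Pi.add_apply, add_mul]
  exact lintegral_add_left (by fun_prop) _

lemma lconvolution_le_lintegral_mul (hf : Measurable f) {c : ℝ≥0∞} (hk : ∀ z, k z ≤ c) (x : G) :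
    (f ⋆ₗ[μ] k) x ≤ (∫⁻ y, f y ∂μ) * c :=
  calc (f ⋆ₗ[μ] k) x ≤ ∫⁻ y, f y * c ∂μ := lintegral_mono fun _ => mul_le_mul_right (hk _) _
    _ = (∫⁻ y, f y ∂μ) * c := lintegral_mul_const _ hf

lemma lintegral_lconvolution [MeasurableAdd₂ G] [MeasurableNeg G] [SFinite μ]
    [μ.IsAddLeftInvariant] (hf : Measurable f) (hk : Measurable k) :
    ∫⁻ x, (f ⋆ₗ[μ] k) x ∂μ = (∫⁻ y, f y ∂μ) * ∫⁻ z, k z ∂μ := by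
  simp only [lconvolution_def]
  rw [lintegral_lintegral_swap (by fun_prop), ← lintegral_mul_const _ hf]
  refine lintegral_congr fun y => ?_
  rw [lintegral_const_mul _ (by fun_prop), lintegral_add_left_eq_self]

end AddGroup

section AddCommGroup

variable [AddCommGroup G] [MeasurableAdd₂ G] [MeasurableNeg G] [μ.IsAddLeftInvariant]
  [μ.IsNegInvariant]

lemma lconvolution_le_mul_lintegral (hk : Measurable k) {c : ℝ≥0∞} (hf : ∀ y, f y ≤ c) (x : G) :
    (f ⋆ₗ[μ] k) x ≤ c * ∫⁻ z, k z ∂μ := by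
  rw [lconvolution_comm, mul_comm]
  exact lconvolution_le_lintegral_mul hk hf x

lemma lconvolution_le_rpow_mul_lconvolution_rpow (hf : Measurable f) (hk : Measurable k) {s : ℝ}
    (hs : 1 ≤ s) (x : G) :
    (f ⋆ₗ[μ] k) x ≤
      (∫⁻ z, k z ∂μ) ^ (1 - 1 / s) * ((fun y => f y ^ s) ⋆ₗ[μ] k) x ^ (1 / s) := by
  have h := lintegral_mul_le_lintegral_rpow_mul (μ := μ) hf
    (k := fun y => k (-y + x)) (by fun_prop) hs
  have htotal : ∫⁻ y, k (-y + x) ∂μ = ∫⁻ z, k z ∂μ := by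
    simp only [neg_add_eq_sub]
    exact lintegral_sub_left_eq_self k x
  rwa [htotal] at h

lemma lintegral_lconvolution_rpow_le [SFinite μ] (hf : Measurable f) (hk : Measurable k) {s : ℝ}
    (hs : 1 ≤ s) :
    ∫⁻ x, (f ⋆ₗ[μ] k) x ^ s ∂μ ≤ (∫⁻ z, k z ∂μ) ^ s * ∫⁻ y, f y ^ s ∂μ := by
  set K := ∫⁻ z, k z ∂μ
  have hs0 : 0 < s := by linarith
  have hpt : ∀ x, (f ⋆ₗ[μ] k) x ^ s ≤ K ^ (s - 1) * ((fun y => f y ^ s) ⋆ₗ[μ] k) x := fun x => by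
    calc (f ⋆ₗ[μ] k) x ^ s
        ≤ (K ^ (1 - 1 / s) * ((fun y => f y ^ s) ⋆ₗ[μ] k) x ^ (1 / s)) ^ s := by
          gcongr; exact lconvolution_le_rpow_mul_lconvolution_rpow hf hk hs x
      _ = K ^ (s - 1) * ((fun y => f y ^ s) ⋆ₗ[μ] k) x := by
          rw [ENNReal.mul_rpow_of_nonneg _ _ hs0.le, ← ENNReal.rpow_mul, ← ENNReal.rpow_mul,
            sub_mul, one_div_mul_cancel hs0.ne', one_mul, ENNReal.rpow_one]
  calc ∫⁻ x, (f ⋆ₗ[μ] k) x ^ s ∂μ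
      ≤ ∫⁻ x, K ^ (s - 1) * ((fun y => f y ^ s) ⋆ₗ[μ] k) x ∂μ := lintegral_mono hpt
    _ = K ^ (s - 1) * ((∫⁻ y, f y ^ s ∂μ) * K) := by
        rw [lintegral_const_mul _ (by fun_prop), lintegral_lconvolution (by fun_prop) hk]
    _ = K ^ (s - 1 + 1) * ∫⁻ y, f y ^ s ∂μ := by
        rw [ENNReal.rpow_add_of_nonneg _ _ (by linarith) zero_le_one, ENNReal.rpow_one]; ring
    _ = K ^ s * ∫⁻ y, f y ^ s ∂μ := by rw [sub_add_cancel]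

end AddCommGroup

end Convolution

section Kernel

variable {n : ℕ} {t m : ℝ}

/-- The kernel `η_{t,m}` with values in `[0, ∞]`, so that its convolution with a nonnegative
function is always meaningful. -/
def etaENN (n : ℕ) (t m : ℝ) (z : Esp n) : ℝ≥0∞ := ENNReal.ofReal (etaKer n t m z)

lemma etaKer_nonneg (ht : 0 < t) (z : Esp n) : 0 ≤ etaKer n t m z := by
  unfold etaKer; positivity

@[fun_prop]
lemma measurable_etaENN : Measurable (etaENN n t m) := by
  unfold etaENN etaKer; fun_prop

lemma etaENN_one (z : Esp n) : etaENN n 1 m z = ENNReal.ofReal ((1 + ‖z‖) ^ (-m)) := by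
  simp [etaENN, etaKer]

lemma lintegral_etaENN_one_lt_top (hm : (n : ℝ) < m) : ∫⁻ z, etaENN n 1 m z < ∞ := by
  simp only [etaENN_one]
  exact finite_integral_one_add_norm (by simpa using hm)

lemma etaENN_eq_mul_etaENN_one (ht : 0 < t) (z : Esp n) :
    etaENN n t m z = ENNReal.ofReal (t ^ (-(n : ℝ))) * etaENN n 1 m (t⁻¹ • z) := by
  rw [etaENN_one, ← ENNReal.ofReal_mul (by positivity), norm_smul, Real.norm_of_nonneg
    (inv_nonneg.2 ht.le), inv_mul_eq_div]
  rfl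

lemma lintegral_etaENN (ht : 0 < t) : ∫⁻ z, etaENN n t m z = ∫⁻ z, etaENN n 1 m z := by
  have hjac : |((t⁻¹) ^ Module.finrank ℝ (Esp n))⁻¹| = t ^ n := by
    rw [finrank_euclideanSpace_fin, inv_pow, inv_inv, abs_of_pos (by positivity)]
  have hscale : ∫⁻ z, etaENN n 1 m (t⁻¹ • z) = ENNReal.ofReal (t ^ n) * ∫⁻ z, etaENN n 1 m z := by
    rw [← lintegral_map measurable_etaENN (measurable_const_smul t⁻¹),
      Measure.map_addHaar_smul _ (inv_ne_zero ht.ne'), lintegral_smul_measure, hjac, smul_eq_mul]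
  simp only [etaENN_eq_mul_etaENN_one ht]
  rw [lintegral_const_mul' _ _ ENNReal.ofReal_ne_top, hscale, ← mul_assoc,
    ← ENNReal.ofReal_mul (by positivity), Real.rpow_neg ht.le, Real.rpow_natCast,
    inv_mul_cancel₀ (by positivity), ENNReal.ofReal_one, one_mul]

lemma etaENN_le (ht : 0 < t) (hm : 0 ≤ m) (z : Esp n) :
    etaENN n t m z ≤ ENNReal.ofReal (t ^ (-(n : ℝ))) := by
  refine ENNReal.ofReal_le_ofReal (mul_le_of_le_one_right (by positivity) ?_)
  exact Real.rpow_le_one_of_one_le_of_nonpos (le_add_of_nonneg_right (by positivity))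
    (neg_nonpos.2 hm)

lemma etaENN_eq_etaENN_sub_mul (ht : 0 < t) (δ : ℝ) (z : Esp n) :
    etaENN n t m z = etaENN n t (m - δ) z * ENNReal.ofReal ((1 + ‖z‖ / t) ^ (-δ)) := by
  unfold etaENN etaKer
  rw [← ENNReal.ofReal_mul (by positivity), mul_assoc, ← Real.rpow_add (by positivity)]
  congr 3; ring

lemma etaENN_anti (ht : 0 < t) {m' : ℝ} (h : m' ≤ m) (z : Esp n) :
    etaENN n t m z ≤ etaENN n t m' z := by
  refine ENNReal.ofReal_le_ofReal (mul_le_mul_of_nonneg_left ?_ (by positivity))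
  exact Real.rpow_le_rpow_of_exponent_le (le_add_of_nonneg_right (by positivity))
    (neg_le_neg h)

lemma etaENN_le_of_lt_norm (hm : (n : ℝ) ≤ m) (ht : 0 < t) {ρ : ℝ} (hρ : 0 < ρ) {z : Esp n}
    (hz : ρ < ‖z‖) : etaENN n t m z ≤ max 1 (ENNReal.ofReal (ρ ^ (-m))) := by
  have hm0 : 0 ≤ m := n.cast_nonneg.trans hm
  rcases le_total t 1 with ht1 | ht1
  · refine le_max_of_le_right (ENNReal.ofReal_le_ofReal ?_)
    calc etaKer n t m z ≤ t ^ (-(n : ℝ)) * (ρ / t) ^ (-m) := by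
          refine mul_le_mul_of_nonneg_left ?_ (by positivity)
          refine Real.rpow_le_rpow_of_nonpos (by positivity) ?_ (neg_nonpos.2 hm0)
          exact (div_le_div_of_nonneg_right hz.le ht.le).trans (by linarith)
      _ = ρ ^ (-m) * t ^ (m - n) := by
          rw [Real.div_rpow hρ.le ht.le, sub_eq_add_neg, Real.rpow_add ht, Real.rpow_neg ht.le m]
          field_simp
      _ ≤ ρ ^ (-m) :=
          mul_le_of_le_one_right (by positivity) (Real.rpow_le_one ht.le ht1 (by linarith))
  · refine le_max_of_le_left ((etaENN_le ht hm0 z).trans (ENNReal.ofReal_le_one.2 ?_))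
    exact Real.rpow_le_one_of_one_le_of_nonpos ht1 (by simp)

end Kernel

section LogHolder

variable {n : ℕ} {p : Esp n → ℝ} {l : ℝ}

lemma IsLogHolder.continuous (h : IsLogHolder n p l) (hp : ∀ x, p x ≠ 0) : Continuous p := by
  obtain ⟨c, _, hloc, _⟩ := h
  suffices hinv : Continuous fun x => 1 / p x by
    exact (hinv.inv₀ fun x => one_div_ne_zero (hp x)).congr fun x => by simp
  refine continuous_iff_continuousAt.2 fun x => continuousAt_iff_punctured_nhds.2 ?_
  refine tendsto_iff_dist_tendsto_zero.2 (squeeze_zero (fun _ => dist_nonneg)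
    (fun y => hloc y x) (Tendsto.const_div_atTop (tendsto_log_atTop.comp ?_) c))
  have hnorm : Tendsto (fun y => ‖y - x‖⁻¹) (nhdsWithin x {x}ᶜ) atTop :=
    tendsto_inv_nhdsGT_zero.comp (tendsto_norm_sub_self_nhdsNE x)
  simpa only [one_div] using tendsto_atTop_add_const_left _ (exp 1) hnorm

lemma IsLogHolder.tendsto_cocompact (h : IsLogHolder n p l) :
    Tendsto (fun x => 1 / p x) (cocompact (Esp n)) (nhds l) := by
  obtain ⟨c, _, _, hdecay⟩ := h
  refine tendsto_iff_dist_tendsto_zero.2 (squeeze_zero (fun _ => dist_nonneg) hdecay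
    (Tendsto.const_div_atTop ?_ c))
  exact tendsto_log_atTop.comp
    (tendsto_atTop_add_const_left _ _ tendsto_norm_cocompact_atTop)

lemma IsLogHolder.mem_Icc (hn : 1 ≤ n) {a b pinf : ℝ} (h : IsLogHolder n p (1 / pinf))
    (ha : 0 < a) (hp : ∀ x, p x ∈ Set.Icc a b) : pinf ∈ Set.Icc a b := by
  have : Nonempty (Fin n) := ⟨⟨0, hn⟩⟩
  have hb : 0 < b := ha.trans_le ((hp 0).1.trans (hp 0).2)
  have hupper : 1 / pinf ≤ 1 / a :=
    le_of_tendsto' h.tendsto_cocompact fun x => one_div_le_one_div_of_le ha (hp x).1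
  have hlower : 1 / b ≤ 1 / pinf := ge_of_tendsto' h.tendsto_cocompact fun x =>
    one_div_le_one_div_of_le (ha.trans_le (hp x).1) (hp x).2
  have hpinf : 0 < pinf := one_div_pos.1 ((one_div_pos.2 hb).trans_le hlower)
  exact ⟨(one_div_le_one_div hpinf ha).1 hupper, (one_div_le_one_div hb hpinf).1 hlower⟩

lemma IsLogHolder.div_const {pinf a : ℝ} (h : IsLogHolder n p (1 / pinf)) (ha : 0 < a) :
    IsLogHolder n (fun x => p x / a) (1 / (pinf / a)) := by
  obtain ⟨c, hc, hloc, hdecay⟩ := h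
  have hscale : ∀ u v : ℝ, |1 / (u / a) - 1 / (v / a)| = a * |1 / u - 1 / v| := fun u v => by
    rw [one_div_div, one_div_div, div_eq_mul_one_div, div_eq_mul_one_div a v, ← mul_sub, abs_mul,
      abs_of_pos ha]
  refine ⟨a * c, mul_pos ha hc, fun x y => ?_, fun x => ?_⟩
  · rw [hscale, mul_div_assoc]; gcongr; exact hloc x y
  · rw [hscale, mul_div_assoc]; gcongr; exact hdecay x

lemma le_of_ae_le_of_continuous {X Y : Type*} [TopologicalSpace X] [MeasurableSpace X]
    {μ : Measure X} [μ.IsOpenPosMeasure] [TopologicalSpace Y] [Preorder Y] [OrderClosedTopology Y]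
    {f g : X → Y} (hf : Continuous f) (hg : Continuous g) (h : f ≤ᵐ[μ] g) : f ≤ g := by
  have hdense := (Measure.dense_of_ae h).closure_eq
  rw [(isClosed_le hf hg).closure_eq] at hdense
  exact fun x => hdense.ge (Set.mem_univ x)

end LogHolder

section DecayComparison

variable {n : ℕ} {Q c m : ℝ}

lemma sub_le_sq_mul_of_abs_one_div_sub_le {u v E : ℝ} (hu : 0 < u) (huQ : u ≤ Q) (hv : 0 < v)
    (hvQ : v ≤ Q) (h : |1 / u - 1 / v| ≤ E) : v - u ≤ Q ^ 2 * E := by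
  have hQ : 0 < Q := hu.trans_le huQ
  calc v - u = u * v * (1 / u - 1 / v) := by field_simp
    _ ≤ u * v * |1 / u - 1 / v| := by gcongr; exact le_abs_self _
    _ ≤ Q * Q * E := by gcongr
    _ = Q ^ 2 * E := by rw [sq]

lemma rpow_le_exp_mul_rpow_add {a : ℝ≥0∞} (ha : a ≤ 1) {u v r : ℝ} (hu : 1 ≤ u) (huQ : u ≤ Q)
    (hv : 0 < v) (hvQ : v ≤ Q) (hc : 0 ≤ c) (hm : 0 ≤ m) (hr : 0 ≤ r)
    (huv : |1 / u - 1 / v| ≤ c / log (exp 1 + r)) :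
    a ^ u ≤ ENNReal.ofReal (exp (m * (Q ^ 2 * c))) *
      (a ^ v + ENNReal.ofReal ((1 + r) ^ (-m))) := by
  set h := (1 + r) ^ (-m) with hdef
  set D := ENNReal.ofReal (exp (m * (Q ^ 2 * c)))
  have hD : 1 ≤ D := ENNReal.one_le_ofReal.2 (one_le_exp (by positivity))
  -- If `a ≤ h` the error term dominates; otherwise `a⁻¹` is polynomially bounded in `1 + r`, so
  -- that its powers with exponents of order `1 / log r` are bounded.
  rcases le_total a (ENNReal.ofReal h) with hah | hah
  · calc a ^ u ≤ a := ENNReal.rpow_le_self_of_le_one ha hu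
      _ ≤ a ^ v + ENNReal.ofReal h := le_add_of_nonneg_of_le zero_le hah
      _ ≤ D * (a ^ v + ENNReal.ofReal h) := le_mul_of_one_le_left' hD
  have hh : 0 < h := by positivity
  have ha0 : a ≠ 0 := ((ENNReal.ofReal_pos.2 hh).trans_le hah).ne'
  have hlog : 0 < log (exp 1 + r) := log_pos (by linarith [add_one_le_exp (1 : ℝ)])
  have hdiff : (v - u) * log (exp 1 + r) ≤ Q ^ 2 * c := by
    calc (v - u) * log (exp 1 + r) ≤ Q ^ 2 * (c / log (exp 1 + r)) * log (exp 1 + r) := by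
          gcongr
          exact sub_le_sq_mul_of_abs_one_div_sub_le (zero_lt_one.trans_le hu) huQ hv hvQ huv
      _ = Q ^ 2 * c := by field_simp
  have hpow : a ^ (u - v) ≤ D := by
    rcases le_total v u with hvu | hvu
    · exact (ENNReal.rpow_le_one ha (sub_nonneg.2 hvu)).trans hD
    calc a ^ (u - v) ≤ ENNReal.ofReal h ^ (u - v) :=
          ennreal_rpow_le_rpow_of_nonpos (sub_nonpos.2 hvu) hah
      _ = ENNReal.ofReal (exp (m * ((v - u) * log (1 + r)))) := by
          rw [ENNReal.ofReal_rpow_of_pos hh, hdef, ← rpow_mul (by positivity),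
            rpow_def_of_pos (by positivity)]
          congr 2; ring
      _ ≤ D := by
          refine ENNReal.ofReal_le_ofReal (exp_le_exp.2 (mul_le_mul_of_nonneg_left ?_ hm))
          refine le_trans (mul_le_mul_of_nonneg_left (log_le_log (by positivity) ?_)
            (sub_nonneg.2 hvu)) hdiff
          linarith [add_one_le_exp (1 : ℝ)]
  calc a ^ u = a ^ (u - v) * a ^ v := by
        rw [← ENNReal.rpow_add _ _ ha0 (ha.trans_lt ENNReal.one_lt_top).ne, sub_add_cancel]
    _ ≤ D * (a ^ v + ENNReal.ofReal h) := mul_le_mul' hpow le_self_add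

lemma lintegral_rpow_le_exp_mul_lintegral_rpow_add {a : Esp n → ℝ≥0∞} (ha : ∀ x, a x ≤ 1)
    {u v : Esp n → ℝ} (hu : ∀ x, 1 ≤ u x) (huQ : ∀ x, u x ≤ Q) (hv : ∀ x, 0 < v x)
    (hvQ : ∀ x, v x ≤ Q) (hc : 0 ≤ c) (hm : 0 ≤ m)
    (huv : ∀ x, |1 / u x - 1 / v x| ≤ c / log (exp 1 + ‖x‖)) :
    ∫⁻ x, a x ^ u x ≤ ENNReal.ofReal (exp (m * (Q ^ 2 * c))) *
      ((∫⁻ x, a x ^ v x) + ∫⁻ x, etaENN n 1 m x) := by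
  rw [← lintegral_add_right _ measurable_etaENN, ← lintegral_const_mul' _ _ ENNReal.ofReal_ne_top]
  refine lintegral_mono fun x => ?_
  rw [etaENN_one]
  exact rpow_le_exp_mul_rpow_add (ha x) (hu x) (huQ x) (hv x) (hvQ x) hc hm (norm_nonneg x) (huv x)

end DecayComparison

section NearDiagonal

variable {n : ℕ} {q : Esp n → ℝ} {Q c t m δ : ℝ}

lemma one_add_div_rpow_neg_le {b d ρ E : ℝ} (hd : 0 ≤ d) (hδ : 0 < δ) (ht : 0 < t)
    (hρ : 0 < ρ) (hρb : ρ ≤ exp (-(d * b / δ))) (hE : 0 ≤ E)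
    (hEb : E ≤ b / log (exp 1 + 1 / ρ)) :
    (1 + ρ / t) ^ (-δ) ≤ exp (d * b) * (t ^ (-d)) ^ (-E) := by
  set w := log (1 + ρ / t)
  set L := log (exp 1 + 1 / ρ)
  have hw : 0 ≤ w := log_nonneg (le_add_of_nonneg_right (by positivity))
  have hρinv : 0 < 1 / ρ := one_div_pos.2 hρ
  have hL : 0 < L := log_pos (by linarith [add_one_le_exp (1 : ℝ)])
  have hδL : d * b ≤ δ * L := by
    have hlogρ : log ρ ≤ -(d * b / δ) := (log_le_iff_le_exp hρ).2 hρb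
    have hinv : -log ρ ≤ L := by
      rw [← log_inv, ← one_div]
      exact log_le_log (by positivity) (le_add_of_nonneg_left (exp_pos 1).le)
    rw [← div_le_iff₀' hδ]
    linarith
  have hlogt : -log t ≤ w + L := by
    rw [← log_inv, ← log_mul (by positivity) (by positivity)]
    refine log_le_log (by positivity) ?_
    calc t⁻¹ = ρ / t * (1 / ρ) := by field_simp
      _ ≤ (1 + ρ / t) * (exp 1 + 1 / ρ) :=
        mul_le_mul (by linarith) (by linarith [exp_pos 1]) (by positivity) (by positivity)
  have hmain : d * E * -log t ≤ d * b + δ * w := by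
    calc d * E * -log t ≤ d * E * (w + L) := by gcongr
      _ ≤ d * (b / L) * (w + L) := by gcongr
      _ = d * b + d * b * w / L := by field_simp; ring
      _ ≤ d * b + δ * L * w / L := by gcongr
      _ = d * b + δ * w := by field_simp
  rw [rpow_def_of_pos (by positivity), ← rpow_mul ht.le, rpow_def_of_pos ht, ← exp_add]
  exact exp_le_exp.2 (by linarith)

lemma one_sub_div_le_mul_of_abs_one_div_sub_le {u v E : ℝ} (hu : 0 < u) (hv : 0 < v)
    (hvQ : v ≤ Q) (h : |1 / u - 1 / v| ≤ E) : 1 - v / u ≤ Q * E := by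
  calc 1 - v / u = v * (1 / v - 1 / u) := by field_simp
    _ ≤ v * E := by
        gcongr
        rw [abs_sub_comm] at h
        exact (le_abs_self _).trans h
    _ ≤ Q * E := mul_le_mul_of_nonneg_right hvQ ((abs_nonneg _).trans h)

lemma etaENN_le_mul_etaENN_sub_mul_rpow (hδ : 0 < δ) (ht : 0 < t) (hc : 0 ≤ c)
    (hq : ∀ x, 0 < q x) (hqQ : ∀ x, q x ≤ Q)
    (hlog : ∀ x y, |1 / q x - 1 / q y| ≤ c / log (exp 1 + 1 / ‖x - y‖)) {x y : Esp n}
    (hxy : ‖x - y‖ ≤ exp (-(n * (Q * c) / δ))) {M : ℝ≥0∞} (hM : 1 ≤ M)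
    (hMt : M ^ q x ≤ ENNReal.ofReal (t ^ (-(n : ℝ)))) :
    etaENN n t m (x - y) ≤
      ENNReal.ofReal (exp (n * (Q * c))) * etaENN n t (m - δ) (x - y) * M ^ (q y - q x) := by
  have hQ : 0 ≤ Q := (hq x).le.trans (hqQ x)
  suffices h : ENNReal.ofReal ((1 + ‖x - y‖ / t) ^ (-δ)) ≤
      ENNReal.ofReal (exp (n * (Q * c))) * M ^ (q y - q x) by
    rw [etaENN_eq_etaENN_sub_mul ht δ, mul_right_comm, mul_comm]
    gcongr
  rcases le_or_gt (q x) (q y) with hqxy | hqxy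
  · calc ENNReal.ofReal ((1 + ‖x - y‖ / t) ^ (-δ)) ≤ 1 :=
          ENNReal.ofReal_le_one.2 (rpow_le_one_of_one_le_of_nonpos
            (le_add_of_nonneg_right (by positivity)) (neg_nonpos.2 hδ.le))
      _ ≤ ENNReal.ofReal (exp (n * (Q * c))) * M ^ (q y - q x) :=
          one_le_mul (ENNReal.one_le_ofReal.2 (one_le_exp (by positivity)))
            ((ENNReal.one_rpow _).ge.trans (ENNReal.rpow_le_rpow hM (sub_nonneg.2 hqxy)))
  have hρ : 0 < ‖x - y‖ := norm_sub_pos_iff.2 fun h => hqxy.ne' (congrArg q h)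
  have hE : 1 - q y / q x ≤ Q * c / log (exp 1 + 1 / ‖x - y‖) := by
    rw [mul_div_assoc]
    exact one_sub_div_le_mul_of_abs_one_div_sub_le (hq x) (hq y) (hqQ y) (hlog x y)
  have hE0 : 0 ≤ 1 - q y / q x := sub_nonneg.2 ((div_le_one (hq x)).2 hqxy.le)
  calc ENNReal.ofReal ((1 + ‖x - y‖ / t) ^ (-δ))
      ≤ ENNReal.ofReal (exp (n * (Q * c)) * (t ^ (-(n : ℝ))) ^ (-(1 - q y / q x))) :=
        ENNReal.ofReal_le_ofReal (one_add_div_rpow_neg_le n.cast_nonneg hδ ht hρ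
          hxy hE0 hE)
    _ = ENNReal.ofReal (exp (n * (Q * c))) *
          ENNReal.ofReal (t ^ (-(n : ℝ))) ^ (-(1 - q y / q x)) := by
        rw [ENNReal.ofReal_mul (exp_pos _).le, ENNReal.ofReal_rpow_of_pos (by positivity)]
    _ ≤ ENNReal.ofReal (exp (n * (Q * c))) * (M ^ q x) ^ (-(1 - q y / q x)) := by
        exact mul_le_mul_right (ennreal_rpow_le_rpow_of_nonpos (neg_nonpos.2 hE0) hMt) _
    _ = ENNReal.ofReal (exp (n * (Q * c))) * M ^ (q y - q x) := by
        have hx := (hq x).ne'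
        rw [← ENNReal.rpow_mul]
        congr 2
        field_simp
        ring

end NearDiagonal

section ModularAndSupBounds

variable {n : ℕ} {m : ℝ} {q : Esp n → ℝ} {Q qm qinf : ℝ}

lemma IsLogHolder.exists_lintegral_rpow_le_mul (hlog : IsLogHolder n q (1 / qinf))
    (hq : ∀ x, q x ∈ Set.Icc 1 Q) (hqinf : qinf ∈ Set.Icc 1 Q) :
    ∃ D : ℝ≥0∞, D ≠ ∞ ∧ ∀ a : Esp n → ℝ≥0∞, (∀ x, a x ≤ 1) →
      ∫⁻ x, a x ^ q x ≤ D * ((∫⁻ x, a x ^ qinf) + 1) ∧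
      ∫⁻ x, a x ^ qinf ≤ D * ((∫⁻ x, a x ^ q x) + 1) := by
  obtain ⟨c, hc, -, hdecay⟩ := hlog
  set K := ∫⁻ z, etaENN n 1 (n + 1) z
  set D₀ := ENNReal.ofReal (exp ((n + 1) * (Q ^ 2 * c)))
  have hK : K ≠ ∞ := (lintegral_etaENN_one_lt_top (by linarith)).ne
  have habsorb : ∀ X : ℝ≥0∞, D₀ * (X + K) ≤ D₀ * (K + 1) * (X + 1) := fun X => by
    rw [mul_assoc]
    refine mul_le_mul_right ?_ D₀
    calc X + K ≤ X + K + (K * X + 1) := le_self_add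
      _ = (K + 1) * (X + 1) := by ring
  refine ⟨D₀ * (K + 1), by finiteness, fun a ha => ⟨?_, ?_⟩⟩
  · exact (lintegral_rpow_le_exp_mul_lintegral_rpow_add ha (fun x => (hq x).1) (fun x => (hq x).2)
      (fun _ => zero_lt_one.trans_le hqinf.1) (fun _ => hqinf.2) hc.le (by positivity)
      hdecay).trans (habsorb _)
  · exact (lintegral_rpow_le_exp_mul_lintegral_rpow_add ha (fun _ => hqinf.1) (fun _ => hqinf.2)
      (fun x => zero_lt_one.trans_le (hq x).1) (fun x => (hq x).2) hc.le (by positivity)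
      fun x => by rw [abs_sub_comm]; exact hdecay x).trans (habsorb _)

lemma IsLogHolder.exists_lintegral_lconvolution_rpow_le_of_le_one
    (hlog : IsLogHolder n q (1 / qinf)) (hq : ∀ x, q x ∈ Set.Icc 1 Q)
    (hqinf : qinf ∈ Set.Icc 1 Q) {K : ℝ≥0∞} (hK : K ≠ ∞) :
    ∃ C : ℝ≥0∞, C ≠ ∞ ∧ ∀ F k : Esp n → ℝ≥0∞, Measurable F → Measurable k →
      (∀ x, F x ≤ 1) → ∫⁻ x, F x ^ q x ≤ 1 → ∫⁻ z, k z ≤ K →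
      ∫⁻ x, (F ⋆ₗ[volume] k) x ^ q x ≤ C := by
  obtain ⟨D, hD, hcomp⟩ := hlog.exists_lintegral_rpow_le_mul hq hqinf
  have hqinf0 : 0 ≤ qinf := zero_le_one.trans hqinf.1
  have hQ : 0 ≤ Q := hqinf0.trans hqinf.2
  refine ⟨(K + 1) ^ Q * (D * (K ^ qinf * (D * (1 + 1)) + 1)), by finiteness,
    fun F k hF hk hF1 hFq hkK => ?_⟩
  set g := F ⋆ₗ[volume] k
  have hK1 : 1 ≤ K + 1 := le_add_self
  have hg : ∀ x, g x / (K + 1) ≤ 1 := fun x => by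
    refine ENNReal.div_le_of_le_mul ((lconvolution_le_mul_lintegral hk hF1 x).trans ?_)
    exact mul_le_mul_right (hkK.trans le_self_add) 1
  calc ∫⁻ x, g x ^ q x
      ≤ ∫⁻ x, (K + 1) ^ Q * (g x / (K + 1)) ^ q x := lintegral_mono fun x =>
        rpow_le_rpow_mul_div_rpow hK1 (by finiteness) (zero_le_one.trans (hq x).1) (hq x).2 _
    _ = (K + 1) ^ Q * ∫⁻ x, (g x / (K + 1)) ^ q x := lintegral_const_mul' _ _ (by finiteness)
    _ ≤ (K + 1) ^ Q * (D * ((∫⁻ x, (g x / (K + 1)) ^ qinf) + 1)) := by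
        gcongr; exact (hcomp _ hg).1
    _ ≤ (K + 1) ^ Q * (D * ((∫⁻ x, g x ^ qinf) + 1)) := by
        gcongr
        exact ENNReal.div_le_of_le_mul (le_mul_of_one_le_right' hK1)
    _ ≤ (K + 1) ^ Q * (D * (K ^ qinf * (∫⁻ x, F x ^ qinf) + 1)) := by
        gcongr
        exact (lintegral_lconvolution_rpow_le hF hk hqinf.1).trans (by gcongr)
    _ ≤ (K + 1) ^ Q * (D * (K ^ qinf * (D * (1 + 1)) + 1)) := by
        gcongr
        exact (hcomp F hF1).2.trans (by gcongr)

lemma IsLogHolder.exists_lconvolution_near_le {l : ℝ} (hlog : IsLogHolder n q l) (hm : (n : ℝ) < m)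
    (hq : ∀ x, q x ∈ Set.Icc 1 Q) :
    ∃ ρ : ℝ, 0 < ρ ∧ ∃ C : ℝ≥0∞, C ≠ ∞ ∧ ∀ t : ℝ, 0 < t → ∀ F : Esp n → ℝ≥0∞, Measurable F →
      (∀ x, F x ≤ F x ^ q x) → ∫⁻ x, F x ^ q x ≤ 1 → ∀ x,
      (F ⋆ₗ[volume] (Metric.closedBall 0 ρ).indicator (etaENN n t m)) x ≤
        C * ((fun y => F y ^ q y) ⋆ₗ[volume] etaENN n t ((m + n) / 2)) x ^ (1 / q x) := by
  have hqm : Measurable q :=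
    (hlog.continuous fun x => (zero_lt_one.trans_le (hq x).1).ne').measurable
  obtain ⟨c, hc, hloc, -⟩ := hlog
  set δ := (m - n) / 2 with hδdef
  have hδ : 0 < δ := by linarith
  have hm' : m - δ = (m + n) / 2 := by ring
  have hQ : 0 ≤ Q := zero_le_one.trans ((hq 0).1.trans (hq 0).2)
  have hK : ∫⁻ z, etaENN n 1 m z ≠ ∞ := (lintegral_etaENN_one_lt_top hm).ne
  set A := ENNReal.ofReal (exp (n * (Q * c)))
  have hA : 1 ≤ A := ENNReal.one_le_ofReal.2 (one_le_exp (by positivity))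
  refine ⟨exp (-(n * (Q * c) / δ)), exp_pos _, (∫⁻ z, etaENN n 1 m z) + A, by finiteness,
    fun t ht F hF hFq hFint x => ?_⟩
  set near := (Metric.closedBall 0 (exp (-(n * (Q * c) / δ)))).indicator (etaENN n t m)
  have hnear : Measurable near :=
    measurable_etaENN.indicator Metric.isClosed_closedBall.measurableSet
  have hmass : ∫⁻ y, near (-y + x) ≤ ∫⁻ z, etaENN n 1 m z := by
    simp only [neg_add_eq_sub]
    rw [lintegral_sub_left_eq_self near x, ← lintegral_etaENN ht]
    exact lintegral_mono (Set.indicator_le_self _ _)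
  have hJt : ∫⁻ y, F y ^ q y * etaENN n t ((m + n) / 2) (-y + x) ≤
      ENNReal.ofReal (t ^ (-(n : ℝ))) :=
    (lconvolution_le_lintegral_mul (by fun_prop)
      (etaENN_le ht (by linarith [n.cast_nonneg (α := ℝ)])) x).trans (mul_le_of_le_one_left' hFint)
  refine (lintegral_mul_le_mul_lintegral_rpow_mul_rpow (k' := fun y => etaENN n t ((m + n) / 2)
    (-y + x)) (A := A) hF (by fun_prop) (by fun_prop) hqm (fun y => (hq y).1) hFq (fun y => ?_)
    hA (hq x).1 (hJt.trans_lt ENNReal.ofReal_lt_top).ne fun M hM hMx y => ?_).trans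
    (mul_le_mul_left (add_le_add_left hmass A) _)
  · exact (Set.indicator_le_self _ _ _).trans (etaENN_anti ht (by linarith) _)
  · refine Set.indicator_apply_le' (fun hy => ?_) fun _ => zero_le
    rw [neg_add_eq_sub] at hy ⊢
    rw [← hm']
    exact etaENN_le_mul_etaENN_sub_mul_rpow hδ ht hc.le (fun y => zero_lt_one.trans_le (hq y).1)
      (fun y => (hq y).2) hloc (mem_closedBall_zero_iff.1 hy) hM (hMx.trans_le hJt)

lemma lconvolution_indicator_compl_closedBall_etaENN_le (hm : (n : ℝ) ≤ m) {t ρ : ℝ} (ht : 0 < t)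
    (hρ : 0 < ρ) {F : Esp n → ℝ≥0∞} (hF : Measurable F) (hFint : ∫⁻ x, F x ≤ 1) (x : Esp n) :
    (F ⋆ₗ[volume] (Metric.closedBall 0 ρ)ᶜ.indicator (etaENN n t m)) x ≤
      max 1 (ENNReal.ofReal (ρ ^ (-m))) := by
  have hfar : ∀ z, (Metric.closedBall 0 ρ)ᶜ.indicator (etaENN n t m) z ≤
      max 1 (ENNReal.ofReal (ρ ^ (-m))) := fun z => Set.indicator_apply_le' (fun hz =>
    etaENN_le_of_lt_norm hm ht hρ (by simpa using hz)) fun _ => zero_le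
  exact (lconvolution_le_lintegral_mul hF hfar x).trans (mul_le_of_le_one_left' hFint)

lemma IsLogHolder.exists_lconvolution_etaENN_le_add {l : ℝ} (hlog : IsLogHolder n q l)
    (hm : (n : ℝ) < m) (hq : ∀ x, q x ∈ Set.Icc 1 Q) :
    ∃ C : ℝ≥0∞, C ≠ ∞ ∧ 1 ≤ C ∧ ∀ t : ℝ, 0 < t → ∀ F : Esp n → ℝ≥0∞, Measurable F →
      (∀ x, F x ≤ F x ^ q x) → ∫⁻ x, F x ^ q x ≤ 1 →
      ∃ J h : Esp n → ℝ≥0∞, Measurable J ∧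
        (∀ x, (F ⋆ₗ[volume] etaENN n t m) x ≤ C * J x ^ (1 / q x) + h x) ∧
        (∀ x, J x ≤ ENNReal.ofReal (t ^ (-(n : ℝ)))) ∧ ∫⁻ x, J x ≤ C ∧
        (∀ x, h x ≤ C) ∧ ∫⁻ x, h x ≤ C := by
  have hqm : Measurable q :=
    (hlog.continuous fun x => (zero_lt_one.trans_le (hq x).1).ne').measurable
  obtain ⟨ρ, hρ, C, hC, hnear⟩ := hlog.exists_lconvolution_near_le hm hq
  set K := ∫⁻ z, etaENN n 1 m z
  set K' := ∫⁻ z, etaENN n 1 ((m + n) / 2) z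
  have hK : K ≠ ∞ := (lintegral_etaENN_one_lt_top hm).ne
  have hK' : K' ≠ ∞ := (lintegral_etaENN_one_lt_top (by linarith)).ne
  set B := max 1 (ENNReal.ofReal (ρ ^ (-m)))
  have hB : B ≠ ∞ := max_ne_top ENNReal.one_ne_top ENNReal.ofReal_ne_top
  have hB1 : 1 ≤ B := le_max_left _ _
  refine ⟨C + K + K' + B, by finiteness, le_add_of_nonneg_of_le zero_le hB1,
    fun t ht F hF hFq hFint => ?_⟩
  set near := (Metric.closedBall 0 ρ).indicator (etaENN n t m)
  set far := (Metric.closedBall 0 ρ)ᶜ.indicator (etaENN n t m)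
  have hball : MeasurableSet (Metric.closedBall (0 : Esp n) ρ) :=
    Metric.isClosed_closedBall.measurableSet
  have hnear_meas : Measurable near := measurable_etaENN.indicator hball
  have hfar_meas : Measurable far := measurable_etaENN.indicator hball.compl
  have hF1 : ∫⁻ x, F x ≤ 1 := (lintegral_mono hFq).trans hFint
  refine ⟨(fun y => F y ^ q y) ⋆ₗ[volume] etaENN n t ((m + n) / 2), F ⋆ₗ[volume] far,
    by fun_prop, fun x => ?_, fun x => ?_, ?_, fun x => ?_, ?_⟩
  · rw [← Set.indicator_self_add_compl (Metric.closedBall 0 ρ) (etaENN n t m),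
      lconvolution_add_right hF hnear_meas]
    refine add_le_add_left ((hnear t ht F hF hFq hFint x).trans (mul_le_mul_left ?_ _)) _
    rw [add_assoc, add_assoc]
    exact le_self_add
  · exact (lconvolution_le_lintegral_mul (by fun_prop)
      (etaENN_le ht (by linarith [n.cast_nonneg (α := ℝ)])) x).trans (mul_le_of_le_one_left' hFint)
  · rw [lintegral_lconvolution (by fun_prop) (by fun_prop), lintegral_etaENN ht]
    exact (mul_le_of_le_one_left' hFint).trans (le_add_self.trans le_self_add)
  · exact (lconvolution_indicator_compl_closedBall_etaENN_le hm.le ht hρ hF hF1 x).trans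
      le_add_self
  · rw [lintegral_lconvolution hF hfar_meas]
    refine (mul_le_of_le_one_left' hF1).trans
      ((lintegral_mono (Set.indicator_le_self _ _)).trans ?_)
    rw [lintegral_etaENN ht, add_assoc, add_right_comm]
    exact le_add_self

lemma IsLogHolder.exists_lintegral_lconvolution_etaENN_rpow_le_of_le_rpow {l : ℝ}
    (hlog : IsLogHolder n q l) (hm : (n : ℝ) < m) (hq : ∀ x, q x ∈ Set.Icc 1 Q) :
    ∃ C : ℝ≥0∞, C ≠ ∞ ∧ ∀ t : ℝ, 0 < t → ∀ F : Esp n → ℝ≥0∞, Measurable F →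
      (∀ x, F x ≤ F x ^ q x) → ∫⁻ x, F x ^ q x ≤ 1 →
      ∫⁻ x, (F ⋆ₗ[volume] etaENN n t m) x ^ q x ≤ C := by
  have hqm : Measurable q :=
    (hlog.continuous fun x => (zero_lt_one.trans_le (hq x).1).ne').measurable
  have hQ : 0 ≤ Q := zero_le_one.trans ((hq 0).1.trans (hq 0).2)
  obtain ⟨C, hC, hC1, hsplit⟩ := hlog.exists_lconvolution_etaENN_le_add hm hq
  refine ⟨2 ^ Q * (C ^ Q * C + C ^ Q * C), by finiteness, fun t ht F hF hFq hFint => ?_⟩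
  obtain ⟨J, h, hJ, hle, -, hJC, hhB, hhC⟩ := hsplit t ht F hF hFq hFint
  have hJq : ∫⁻ x, (C * J x ^ (1 / q x)) ^ q x ≤ C ^ Q * C := by
    calc ∫⁻ x, (C * J x ^ (1 / q x)) ^ q x ≤ ∫⁻ x, C ^ Q * J x := lintegral_mono fun x => by
          have hx : 0 < q x := zero_lt_one.trans_le (hq x).1
          rw [ENNReal.mul_rpow_of_nonneg _ _ hx.le, ← ENNReal.rpow_mul,
            one_div_mul_cancel hx.ne', ENNReal.rpow_one]
          gcongr
          exact (hq x).2
      _ = C ^ Q * ∫⁻ x, J x := lintegral_const_mul _ hJ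
      _ ≤ C ^ Q * C := by gcongr
  have hhq : ∫⁻ x, h x ^ q x ≤ C ^ Q * C :=
    (lintegral_rpow_le_mul_lintegral_of_le hC1 hC hhB (fun x => (hq x).1)
      fun x => (hq x).2).trans (by gcongr)
  calc ∫⁻ x, (F ⋆ₗ[volume] etaENN n t m) x ^ q x
      ≤ ∫⁻ x, (C * J x ^ (1 / q x) + h x) ^ q x := lintegral_mono fun x =>
        ENNReal.rpow_le_rpow (hle x) (zero_le_one.trans (hq x).1)
    _ ≤ 2 ^ Q * (∫⁻ x, (C * J x ^ (1 / q x)) ^ q x ∂volume + ∫⁻ x, h x ^ q x) :=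
        lintegral_add_rpow_le (by fun_prop) hqm (fun x => zero_le_one.trans (hq x).1)
          fun x => (hq x).2
    _ ≤ 2 ^ Q * (C ^ Q * C + C ^ Q * C) := by gcongr

lemma IsLogHolder.exists_lintegral_lconvolution_etaENN_rpow_le
    (hlog : IsLogHolder n q (1 / qinf)) (hm : (n : ℝ) < m) (hq : ∀ x, q x ∈ Set.Icc 1 Q)
    (hqinf : qinf ∈ Set.Icc 1 Q) :
    ∃ C : ℝ≥0∞, C ≠ ∞ ∧ ∀ t : ℝ, 0 < t → ∀ F : Esp n → ℝ≥0∞, Measurable F →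
      ∫⁻ x, F x ^ q x ≤ 1 → ∫⁻ x, (F ⋆ₗ[volume] etaENN n t m) x ^ q x ≤ C := by
  have hqm : Measurable q :=
    (hlog.continuous fun x => (zero_lt_one.trans_le (hq x).1).ne').measurable
  obtain ⟨C₁, hC₁, hsmall⟩ := hlog.exists_lintegral_lconvolution_rpow_le_of_le_one hq hqinf
    (lintegral_etaENN_one_lt_top hm).ne
  obtain ⟨C₂, hC₂, hlarge⟩ :=
    hlog.exists_lintegral_lconvolution_etaENN_rpow_le_of_le_rpow hm hq
  refine ⟨2 ^ Q * (C₁ + C₂), by finiteness, fun t ht F hF hFint => ?_⟩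
  obtain ⟨F₁, F₂, hF₁, hF₂, rfl, hF₁le, hF₂le, hF₁int, hF₂int⟩ :=
    exists_add_eq_le_one_le_rpow (μ := volume) hF fun x => (hq x).1
  rw [lconvolution_add_left hF₁ measurable_etaENN]
  refine (lintegral_add_rpow_le (by fun_prop) hqm (fun x => zero_le_one.trans (hq x).1)
    fun x => (hq x).2).trans (mul_le_mul_right (add_le_add ?_ ?_) _)
  · exact hsmall F₁ _ hF₁ measurable_etaENN hF₁le (hF₁int.trans hFint) (lintegral_etaENN ht).le
  · exact hlarge t ht F₂ hF₂ hF₂le (hF₂int.trans hFint)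

lemma IsLogHolder.exists_lconvolution_etaENN_le_of_le_one {l : ℝ} (hlog : IsLogHolder n q l)
    (hm : (n : ℝ) < m) (hqm : 1 ≤ qm) (hq : ∀ x, q x ∈ Set.Icc qm Q) :
    ∃ C : ℝ≥0∞, C ≠ ∞ ∧ ∀ t : ℝ, 0 < t → t ≤ 1 → ∀ F : Esp n → ℝ≥0∞, Measurable F →
      ∫⁻ x, F x ^ q x ≤ 1 → ∀ x, (F ⋆ₗ[volume] etaENN n t m) x ≤
        C * ENNReal.ofReal (t ^ (-(n : ℝ))) ^ (1 / qm) := by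
  have hq1 : ∀ x, q x ∈ Set.Icc 1 Q := fun x => ⟨hqm.trans (hq x).1, (hq x).2⟩
  have hqm0 : 0 < qm := zero_lt_one.trans_le hqm
  obtain ⟨C, hC, -, hsplit⟩ := hlog.exists_lconvolution_etaENN_le_add hm hq1
  have hK : ∫⁻ z, etaENN n 1 m z ≠ ∞ := (lintegral_etaENN_one_lt_top hm).ne
  refine ⟨(∫⁻ z, etaENN n 1 m z) + C + C, by finiteness, fun t ht ht1 F hF hFint x => ?_⟩
  obtain ⟨F₁, F₂, hF₁, hF₂, rfl, hF₁le, hF₂le, -, hF₂int⟩ :=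
    exists_add_eq_le_one_le_rpow (μ := volume) hF fun x => (hq1 x).1
  obtain ⟨J, h, -, hle, hJ, -, hh, -⟩ := hsplit t ht F₂ hF₂ hF₂le (hF₂int.trans hFint)
  set N := ENNReal.ofReal (t ^ (-(n : ℝ)))
  have hN : 1 ≤ N := ENNReal.one_le_ofReal.2
    (one_le_rpow_of_pos_of_le_one_of_nonpos ht ht1 (by simp))
  have hNqm : 1 ≤ N ^ (1 / qm) := ENNReal.one_le_rpow hN (by positivity)
  have hJqm : J x ^ (1 / q x) ≤ N ^ (1 / qm) := by
    have hx : 0 < q x := hqm0.trans_le (hq x).1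
    calc J x ^ (1 / q x) ≤ N ^ (1 / q x) := ENNReal.rpow_le_rpow (hJ x) (by positivity)
      _ ≤ N ^ (1 / qm) :=
        ENNReal.rpow_le_rpow_of_exponent_le hN (one_div_le_one_div_of_le hqm0 (hq x).1)
  rw [lconvolution_add_left hF₁ measurable_etaENN, add_assoc, add_mul, add_mul]
  refine add_le_add ?_ ((hle x).trans (add_le_add (mul_le_mul_right hJqm C)
    ((hh x).trans (le_mul_of_one_le_right' hNqm))))
  rw [← lintegral_etaENN ht]
  refine (lconvolution_le_mul_lintegral measurable_etaENN hF₁le x).trans ?_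
  rw [one_mul]
  exact le_mul_of_one_le_right' hNqm

lemma IsLogHolder.exists_lconvolution_etaENN_le_of_one_le (hlog : IsLogHolder n q (1 / qinf))
    (hm : (n : ℝ) < m) (hq : ∀ x, q x ∈ Set.Icc 1 Q) (hqinf : qinf ∈ Set.Icc 1 Q) :
    ∃ C : ℝ≥0∞, C ≠ ∞ ∧ ∀ t : ℝ, 1 ≤ t → ∀ F : Esp n → ℝ≥0∞, Measurable F →
      ∫⁻ x, F x ^ q x ≤ 1 → ∀ x, (F ⋆ₗ[volume] etaENN n t m) x ≤
        C * ENNReal.ofReal (t ^ (-(n : ℝ))) ^ (1 / qinf) := by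
  have hqinf0 : 0 < qinf := zero_lt_one.trans_le hqinf.1
  have hinv : 0 ≤ 1 - 1 / qinf := sub_nonneg.2 ((div_le_one hqinf0).2 hqinf.1)
  obtain ⟨D, hD, hcomp⟩ := hlog.exists_lintegral_rpow_le_mul hq hqinf
  have hK : ∫⁻ z, etaENN n 1 m z ≠ ∞ := (lintegral_etaENN_one_lt_top hm).ne
  refine ⟨(∫⁻ z, etaENN n 1 m z) ^ (1 - 1 / qinf) * (D * (1 + 1)) ^ (1 / qinf) + 1,
    by finiteness, fun t ht1 F hF hFint x => ?_⟩
  have ht : 0 < t := zero_lt_one.trans_le ht1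
  have hm0 : 0 ≤ m := n.cast_nonneg.trans hm.le
  obtain ⟨F₁, F₂, hF₁, hF₂, rfl, hF₁le, hF₂le, hF₁int, hF₂int⟩ :=
    exists_add_eq_le_one_le_rpow (μ := volume) hF fun x => (hq x).1
  set N := ENNReal.ofReal (t ^ (-(n : ℝ)))
  have hN : N ≤ 1 := ENNReal.ofReal_le_one.2 (rpow_le_one_of_one_le_of_nonpos ht1 (by simp))
  rw [lconvolution_add_left hF₁ measurable_etaENN, add_mul, one_mul]
  refine add_le_add ?_ ?_
  · rw [mul_assoc, ← ENNReal.mul_rpow_of_nonneg _ _ (one_div_nonneg.2 hqinf0.le),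
      ← lintegral_etaENN ht]
    refine (lconvolution_le_rpow_mul_lconvolution_rpow hF₁ measurable_etaENN hqinf.1 x).trans
      (mul_le_mul_right (ENNReal.rpow_le_rpow ?_ (one_div_nonneg.2 hqinf0.le)) _)
    refine (lconvolution_le_lintegral_mul (by fun_prop) (etaENN_le ht hm0) x).trans ?_
    gcongr
    exact (hcomp F₁ hF₁le).2.trans (by gcongr; exact hF₁int.trans hFint)
  · calc (F₂ ⋆ₗ[volume] etaENN n t m) x ≤ (∫⁻ y, F₂ y) * N :=
          lconvolution_le_lintegral_mul hF₂ (etaENN_le ht hm0) x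
      _ ≤ N := mul_le_of_le_one_left' ((lintegral_mono hF₂le).trans (hF₂int.trans hFint))
      _ ≤ N ^ (1 / qinf) := by
          simpa using ENNReal.rpow_le_rpow_of_exponent_ge hN ((div_le_one hqinf0).2 hqinf.1)

lemma IsLogHolder.exists_lconvolution_etaENN_le (hlog : IsLogHolder n q (1 / qinf))
    (hm : (n : ℝ) < m) (hqm : 1 ≤ qm) (hq : ∀ x, q x ∈ Set.Icc qm Q)
    (hqinf : qinf ∈ Set.Icc 1 Q) :
    ∃ C : ℝ≥0∞, C ≠ ∞ ∧ ∀ t : ℝ, 0 < t → ∀ F : Esp n → ℝ≥0∞, Measurable F →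
      ∫⁻ x, F x ^ q x ≤ 1 → ∀ x, (F ⋆ₗ[volume] etaENN n t m) x ≤
        C * ENNReal.ofReal (t ^ (-(n : ℝ))) ^ (if t ≤ 1 then 1 / qm else 1 / qinf) := by
  obtain ⟨C₁, hC₁, hsmall⟩ := hlog.exists_lconvolution_etaENN_le_of_le_one hm hqm hq
  obtain ⟨C₂, hC₂, hlarge⟩ := hlog.exists_lconvolution_etaENN_le_of_one_le hm
    (fun x => ⟨hqm.trans (hq x).1, (hq x).2⟩) hqinf
  refine ⟨C₁ + C₂, by finiteness, fun t ht F hF hFint x => ?_⟩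
  split_ifs with ht1
  · exact (hsmall t ht ht1 F hF hFint x).trans (mul_le_mul_left le_self_add _)
  · exact (hlarge t (not_le.1 ht1).le F hF hFint x).trans (mul_le_mul_left le_add_self _)

lemma IsLogHolder.exists_lintegral_lconvolution_etaENN_div_rpow_le {p : Esp n → ℝ}
    {pm pM pinf : ℝ} (hlog : IsLogHolder n p (1 / pinf)) (hm : (n : ℝ) < m) (hpm : 2 ≤ pm)
    (hp : ∀ x, p x ∈ Set.Icc pm pM) (hpinf : pinf ∈ Set.Icc 2 pM) :
    ∃ C : ℝ≥0∞, C ≠ ∞ ∧ ∀ t : ℝ, 0 < t → ∀ F : Esp n → ℝ≥0∞, Measurable F →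
      ∫⁻ x, F x ^ (p x / 2) ≤ 1 →
      ∫⁻ x, ((F ⋆ₗ[volume] etaENN n t m) x /
        ENNReal.ofReal (t ^ (-(n : ℝ) * (if t ≤ 1 then 1 / pm else 1 / pinf)))) ^ p x ≤ C := by
  have hlog2 := hlog.div_const zero_lt_two
  have hq : ∀ x, p x / 2 ∈ Set.Icc (pm / 2) (pM / 2) := fun x =>
    ⟨div_le_div_of_nonneg_right (hp x).1 zero_le_two,
      div_le_div_of_nonneg_right (hp x).2 zero_le_two⟩
  have hqm : 1 ≤ pm / 2 := by linarith
  have hqinf : pinf / 2 ∈ Set.Icc 1 (pM / 2) :=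
    ⟨by linarith [hpinf.1], div_le_div_of_nonneg_right hpinf.2 zero_le_two⟩
  obtain ⟨C₁, hC₁, hmod⟩ := hlog2.exists_lintegral_lconvolution_etaENN_rpow_le hm
    (fun x => ⟨hqm.trans (hq x).1, (hq x).2⟩) hqinf
  obtain ⟨C₂, hC₂, hsup⟩ := hlog2.exists_lconvolution_etaENN_le hm hqm hq hqinf
  refine ⟨(C₂ + 1) ^ (pM / 2) * C₁, by finiteness, fun t ht F hF hFint => ?_⟩
  set T := ENNReal.ofReal (t ^ (-(n : ℝ) * (if t ≤ 1 then 1 / pm else 1 / pinf)))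
  have hT : ENNReal.ofReal (t ^ (-(n : ℝ))) ^
      (if t ≤ 1 then 1 / (pm / 2) else 1 / (pinf / 2)) = T ^ 2 := by
    rw [← ENNReal.ofReal_pow (by positivity), ← rpow_mul_natCast ht.le,
      ENNReal.ofReal_rpow_of_pos (by positivity), ← rpow_mul ht.le]
    congr 2
    split_ifs <;> push_cast <;> field_simp
  set g := F ⋆ₗ[volume] etaENN n t m
  have hg : ∀ x, g x ≤ (C₂ + 1) * T ^ 2 := fun x =>
    hT ▸ (hsup t ht F hF hFint x).trans (mul_le_mul_left le_self_add _)
  calc ∫⁻ x, (g x / T) ^ p x ≤ ∫⁻ x, (C₂ + 1) ^ (pM / 2) * g x ^ (p x / 2) :=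
        lintegral_mono fun x => by
          have h := div_rpow_two_mul_le le_add_self (hg x)
            (zero_le_one.trans (hqm.trans (hq x).1)) (hq x).2
          rwa [mul_div_cancel₀ _ two_ne_zero] at h
    _ = (C₂ + 1) ^ (pM / 2) * ∫⁻ x, g x ^ (p x / 2) := lintegral_const_mul' _ _ (by finiteness)
    _ ≤ (C₂ + 1) ^ (pM / 2) * C₁ := by gcongr; exact hmod t ht F hF hFint

end ModularAndSupBounds

section LuxemburgNorm

variable {n : ℕ} {p q f g u : Esp n → ℝ} {A C T lam mu : ℝ}

lemma luxNorm_nonneg : 0 ≤ luxNorm n p f := Real.sInf_nonneg fun _ h => h.1.le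

lemma luxNorm_le_of_vMod_le (hp : ∀ x, 1 ≤ p x) (hC : 1 ≤ C) (hlam : 0 < lam)
    (h : vMod n p (fun x => g x / lam) ≤ ENNReal.ofReal C) : luxNorm n p g ≤ C * lam := by
  have hC0 : 0 < C := zero_lt_one.trans_le hC
  have hCinv : (ENNReal.ofReal C)⁻¹ ≠ ∞ := by simpa using hC0
  refine csInf_le ⟨0, fun _ h => h.1.le⟩ ⟨mul_pos hC0 hlam, ?_⟩
  have hpt : ∀ x, ENNReal.ofReal |g x / (C * lam)| ^ p x ≤
      (ENNReal.ofReal C)⁻¹ * ENNReal.ofReal |g x / lam| ^ p x := fun x => by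
    rw [mul_comm C, ← div_div, abs_div, abs_of_pos hC0, ENNReal.ofReal_div_of_pos hC0,
      ENNReal.div_eq_inv_mul, ENNReal.mul_rpow_of_nonneg _ _ (zero_le_one.trans (hp x))]
    gcongr
    exact ENNReal.rpow_le_self_of_le_one (ENNReal.inv_le_one.2 (ENNReal.one_le_ofReal.2 hC)) (hp x)
  calc vMod n p (fun x => g x / (C * lam))
      ≤ ∫⁻ x, (ENNReal.ofReal C)⁻¹ * ENNReal.ofReal |g x / lam| ^ p x := lintegral_mono hpt
    _ = (ENNReal.ofReal C)⁻¹ * vMod n p (fun x => g x / lam) := lintegral_const_mul' _ _ hCinv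
    _ ≤ (ENNReal.ofReal C)⁻¹ * ENNReal.ofReal C := by gcongr
    _ ≤ 1 := ENNReal.inv_mul_le_one _

lemma luxNorm_le_mul_luxNorm (hA : 0 < A) (hf : MemVLp n q f)
    (h : ∀ mu, 0 < mu → vMod n q (fun x => f x / mu) ≤ 1 → luxNorm n p g ≤ A * mu) :
    luxNorm n p g ≤ A * luxNorm n q f := by
  rw [← div_le_iff₀' hA]
  exact le_csInf hf.2 fun mu hmu => (div_le_iff₀' hA).2 (h mu hmu.1 hmu.2)

lemma convR_div_const (x : Esp n) : convR n u (fun y => f y / mu) x = convR n u f x / mu := by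
  simp only [convR, mul_div_assoc', integral_div]

lemma ofReal_abs_convR_le (hu : ∀ z, 0 ≤ u z) (x : Esp n) :
    ENNReal.ofReal |convR n u f x| ≤
      ((fun y => ENNReal.ofReal |f y|) ⋆ₗ[volume] fun z => ENNReal.ofReal (u z)) x := by
  rw [← Real.enorm_eq_ofReal_abs]
  refine (enorm_integral_le_lintegral_enorm _).trans_eq (lintegral_congr fun y => ?_)
  rw [neg_add_eq_sub, ← ENNReal.ofReal_mul (abs_nonneg _), Real.enorm_eq_ofReal_abs, abs_mul,
    abs_of_nonneg (hu _), mul_comm]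

lemma luxNorm_convR_le (hp : ∀ x, 1 ≤ p x) (hu : ∀ z, 0 ≤ u z) (hC : 1 ≤ C) (hT : 0 < T)
    (h : ∀ F : Esp n → ℝ≥0∞, Measurable F → ∫⁻ x, F x ^ q x ≤ 1 →
      ∫⁻ x, ((F ⋆ₗ[volume] fun z => ENNReal.ofReal (u z)) x / ENNReal.ofReal T) ^ p x ≤
        ENNReal.ofReal C)
    (hf : MemVLp n q f) : luxNorm n p (convR n u f) ≤ C * T * luxNorm n q f := by
  refine luxNorm_le_mul_luxNorm (mul_pos (zero_lt_one.trans_le hC) hT) hf fun mu hmu hmod => ?_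
  have hF₀ : AEMeasurable (fun y => ENNReal.ofReal |f y / mu|) :=
    (hf.1.div_const mu).abs.ennreal_ofReal
  set F := hF₀.mk _
  have hFint : ∫⁻ y, F y ^ q y ≤ 1 := by
    refine (lintegral_congr_ae ?_).trans_le hmod
    filter_upwards [hF₀.ae_eq_mk] with y hy
    rw [hy]
  have hconv : ∀ x, ENNReal.ofReal |convR n u f x / mu| ≤
      (F ⋆ₗ[volume] fun z => ENNReal.ofReal (u z)) x := fun x => by
    rw [← convR_div_const]
    refine (ofReal_abs_convR_le hu x).trans_eq (lintegral_congr_ae ?_)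
    filter_upwards [hF₀.ae_eq_mk] with y hy
    rw [hy]
  rw [mul_assoc]
  refine luxNorm_le_of_vMod_le hp hC (mul_pos hT hmu)
    ((lintegral_mono fun x => ?_).trans (h F hF₀.measurable_mk hFint))
  refine ENNReal.rpow_le_rpow ?_ (zero_le_one.trans (hp x))
  change ENNReal.ofReal |convR n u f x / (T * mu)| ≤ _
  rw [mul_comm T, ← div_div, abs_div, abs_of_pos hT, ENNReal.ofReal_div_of_pos hT]
  exact ENNReal.div_le_div_right (hconv x) _

end LuxemburgNorm

section Rates

variable {pm pinf : ℝ}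

lemma one_div_sub_one_le_one_div (h2 : 2 ≤ pm) (h : pm ≤ pinf) :
    1 / (pinf - 1) ≤ 1 / (1 + pinf * (1 - 2 / pm)) := by
  have hpm : 0 < pm := zero_lt_two.trans_le h2
  have hle : 2 / pm ≤ 1 := (div_le_one hpm).2 h2
  have hge : 2 ≤ pinf * (2 / pm) := by
    calc 2 = pm * (2 / pm) := by field_simp
      _ ≤ pinf * (2 / pm) := by gcongr
  exact one_div_le_one_div_of_le (by nlinarith) (by linarith)

lemma one_div_le_theta_of_le_one (h2 : 2 ≤ pm) (h : pm ≤ pinf) :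
    1 / pm ≤ (2 / pm - 1 / pinf) *
      ((2 + pinf * (1 - 2 / pm)) / (1 + pinf * (1 - 2 / pm)) - 1 / (pinf - 1)) := by
  have hpm : 0 < pm := zero_lt_two.trans_le h2
  have hd : 0 ≤ pinf * (1 - 2 / pm) :=
    mul_nonneg (hpm.le.trans h) (sub_nonneg.2 ((div_le_one hpm).2 h2))
  have hfrac : (2 + pinf * (1 - 2 / pm)) / (1 + pinf * (1 - 2 / pm)) =
      1 + 1 / (1 + pinf * (1 - 2 / pm)) := by
    generalize pinf * (1 - 2 / pm) = d at hd
    field_simp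
    ring
  have hinv : 1 / pinf ≤ 1 / pm := one_div_le_one_div_of_le hpm h
  have hdouble : 2 / pm = 1 / pm + 1 / pm := by ring
  have hleft : 1 / pm ≤ 2 / pm - 1 / pinf := by linarith
  refine hleft.trans (le_mul_of_one_le_right ((one_div_pos.2 hpm).le.trans hleft) ?_)
  rw [hfrac]
  linarith [one_div_sub_one_le_one_div h2 h]

lemma theta_le_one_div_of_one_lt (h2 : 2 ≤ pm) (h : pm ≤ pinf) :
    (1 / pinf) * ((pinf * (1 - 2 / pm)) / (1 + pinf * (1 - 2 / pm)) + 1 / (pinf - 1)) ≤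
      1 / pinf := by
  have hpm : 0 < pm := zero_lt_two.trans_le h2
  have hd : 0 ≤ pinf * (1 - 2 / pm) :=
    mul_nonneg (hpm.le.trans h) (sub_nonneg.2 ((div_le_one hpm).2 h2))
  have hfrac : (pinf * (1 - 2 / pm)) / (1 + pinf * (1 - 2 / pm)) =
      1 - 1 / (1 + pinf * (1 - 2 / pm)) := by
    generalize pinf * (1 - 2 / pm) = d at hd
    field_simp
    ring
  refine mul_le_of_le_one_right (one_div_nonneg.2 (hpm.le.trans h)) ?_
  rw [hfrac]
  linarith [one_div_sub_one_le_one_div h2 h]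

lemma rpow_rate_le_rpow_theta {d t : ℝ} (hd : 0 ≤ d) (ht : 0 < t) (h2 : 2 ≤ pm)
    (h : pm ≤ pinf) :
    t ^ (-d * (if t ≤ 1 then 1 / pm else 1 / pinf)) ≤
      t ^ (-d *
        (if t ≤ 1 then
          (2 / pm - 1 / pinf) *
            ((2 + pinf * (1 - 2 / pm)) / (1 + pinf * (1 - 2 / pm)) - 1 / (pinf - 1))
        else
          (1 / pinf) *
            ((pinf * (1 - 2 / pm)) / (1 + pinf * (1 - 2 / pm)) + 1 / (pinf - 1)))) := by
  split_ifs with ht1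
  · exact rpow_le_rpow_of_exponent_ge ht ht1
      (mul_le_mul_of_nonpos_left (one_div_le_theta_of_le_one h2 h) (neg_nonpos.2 hd))
  · exact rpow_le_rpow_of_exponent_le (not_le.1 ht1).le
      (mul_le_mul_of_nonpos_left (theta_le_one_div_of_one_lt h2 h) (neg_nonpos.2 hd))

end Rates

lemma IsLogHolder.mem_Icc_essInf_essSup {n : ℕ} {p : Esp n → ℝ} {l : ℝ}
    (hlog : IsLogHolder n p l) (hp1 : ∀ x, 1 ≤ p x)
    (hbdd : IsBoundedUnder (· ≤ ·) (ae (volume : Measure (Esp n))) p) (x : Esp n) :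
    p x ∈ Set.Icc (essInf p volume) (essSup p volume) := by
  have hcont : Continuous p := hlog.continuous fun x => (zero_lt_one.trans_le (hp1 x)).ne'
  have hbelow : IsBoundedUnder (· ≥ ·) (ae (volume : Measure (Esp n))) p :=
    isBoundedUnder_of ⟨1, hp1⟩
  exact ⟨le_of_ae_le_of_continuous continuous_const hcont (ae_essInf_le hbelow) x,
    le_of_ae_le_of_continuous hcont continuous_const (ae_le_essSup hbdd) x⟩

theorem statement0_general (n : ℕ) (hn : 1 ≤ n) (m : ℝ) (hm : (n : ℝ) < m)
    (p : Esp n → ℝ) (hp1 : ∀ x, 1 ≤ p x) (pm pinf : ℝ) (hpm : pm = essInf p volume)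
    (hbdd : IsBoundedUnder (· ≤ ·) (ae (volume : Measure (Esp n))) p)
    (hlog : IsLogHolder n p (1 / pinf)) (h2 : 2 ≤ pm) :
    ∃ C : ℝ, 0 < C ∧ ∀ t : ℝ, 0 < t → ∀ f : Esp n → ℝ,
      MemVLp n (fun x => p x / 2) f →
      luxNorm n p (convR n (etaKer n t m) f) ≤
        C * t ^ (-(n : ℝ) * (if t ≤ 1 then 1 / pm else 1 / pinf)) *
          luxNorm n (fun x => p x / 2) f := by
  have hp : ∀ x, p x ∈ Set.Icc pm (essSup p volume) :=
    hpm ▸ hlog.mem_Icc_essInf_essSup hp1 hbdd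
  obtain ⟨hpinf, hpinf'⟩ := hlog.mem_Icc hn (zero_lt_two.trans_le h2) hp
  obtain ⟨C, hC, hmod⟩ := hlog.exists_lintegral_lconvolution_etaENN_div_rpow_le hm h2 hp
    ⟨h2.trans hpinf, hpinf'⟩
  refine ⟨max 1 C.toReal, by positivity, fun t ht f hf => ?_⟩
  refine luxNorm_convR_le hp1 (etaKer_nonneg ht) (le_max_left _ _) (by positivity)
    (fun F hF hFint => (hmod t ht F hF hFint).trans ?_) hf
  exact (ENNReal.ofReal_toReal hC).ge.trans (ENNReal.ofReal_le_ofReal (le_max_right _ _))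

/-- Lemma 3.2 of the paper: `‖η_{t,m} * f‖_{L^{p(·)}} ≤ C t^{-nϑ(t)} ‖f‖_{L^{p(·)/2}}` for a
globally log-Hölder exponent `p` with `2 ≤ p⁻ ≤ p⁺ < ∞` and `p⁺ = p_∞`. -/
theorem statement0 (n : ℕ) (hn : 1 ≤ n) (m : ℝ) (hm : (n : ℝ) < m)
    (p : Esp n → ℝ) (hpmeas : Measurable p) (hp1 : ∀ x, 1 ≤ p x)
    (pm pinf : ℝ) (hpm : pm = essInf p volume) (hpinf : pinf = essSup p volume)
    (hbdd : IsBoundedUnder (· ≤ ·) (ae (volume : Measure (Esp n))) p)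
    (hlog : IsLogHolder n p (1 / pinf))
    (h2 : 2 ≤ pm) :
    ∃ C : ℝ, 0 < C ∧ ∀ t : ℝ, 0 < t → ∀ f : Esp n → ℝ,
      MemVLp n (fun x => p x / 2) f →
      luxNorm n p (convR n (etaKer n t m) f) ≤
        C * t ^ (-(n : ℝ) *
          (if t ≤ 1 then
            (2 / pm - 1 / pinf) *
              ((2 + pinf * (1 - 2 / pm)) / (1 + pinf * (1 - 2 / pm)) - 1 / (pinf - 1))
          else
            (1 / pinf) *
              ((pinf * (1 - 2 / pm)) / (1 + pinf * (1 - 2 / pm)) + 1 / (pinf - 1)))) *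
        luxNorm n (fun x => p x / 2) f := by
  have hp := hlog.mem_Icc_essInf_essSup hp1 hbdd
  rw [← hpm, ← hpinf] at hp
  obtain ⟨C, hC, h⟩ := statement0_general n hn m hm p hp1 pm pinf hpm hbdd hlog h2
  refine ⟨C, hC, fun t ht f hf => (h t ht f hf).trans ?_⟩
  exact mul_le_mul_of_nonneg_right (mul_le_mul_of_nonneg_left
    (rpow_rate_le_rpow_theta n.cast_nonneg ht h2 ((hp 0).1.trans (hp 0).2)) hC.le) luxNorm_nonneg
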